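/- Assume 0 < c_f < 1/(L₁ + 6) and b = (1 + c_f L₁)/2. For any j ∈ {1, …, Q_k} and any p ∈ [b, 1], set q = (p − b)/(1 − b). Then: (1) if q ∉ I_j, then F_j(p) = F₀(p); (2) if q ∈ I_j, then 0 ≤ (1 − F_j(p)) − (1 − F₀(p)) ≤ (3/2)·c_f·w_k^m, and moreover 1/2 ≤ 1 − F₀(p) ≤ 1/(1 + c_f) and 1/2 ≤ 1 − F_j(p) ≤ 1/(1 + c_f). -/

import Mathlib

open Set MeasureTheory

/-- The basic mollifier `u₀(x) = exp(−1/(x(1/3 − x)))` on `(0, 1/3)`, `0` elsewhere. -/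
noncomputable def u0 (x : ℝ) : ℝ :=
  if x ∈ Set.Ioo (0 : ℝ) (1 / 3) then Real.exp (-(1 / (x * (1 / 3 - x)))) else 0

/-- The normalized primitive `u(x) = (∫₀^{1/3} u₀)⁻¹ · ∫_{−∞}^x u₀`. -/
noncomputable def uFn (x : ℝ) : ℝ :=
  (∫ t in (0 : ℝ)..(1 / 3), u0 t)⁻¹ * ∫ t in Set.Iic x, u0 t

/-- `L₁ = sup_x |u'(x)|`. -/
noncomputable def L1 : ℝ := ⨆ x : ℝ, |deriv uFn x|

/-- The bump function `B`. -/
noncomputable def bump (x : ℝ) : ℝ :=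
  if x < 0 then 0
  else if x ≤ 1 / 3 then uFn x
  else if x < 2 / 3 then 1
  else if x ≤ 1 then uFn (1 - x)
  else 0

/-- The bump function rescaled to the interval `[a, b]`. -/
noncomputable def bumpOn (a b x : ℝ) : ℝ := bump ((x - a) / (b - a))

/-- The interval widths: `w 0 = 1` and `w k = 3^(−k!)` for `k ≥ 1`. -/
noncomputable def wSeq : ℕ → ℝ := fun k => if k = 0 then 1 else (3 : ℝ) ^ (-(k.factorial : ℤ))

/-- `a, b : ℕ → ℝ` describe an admissible nested sequence of intervals:
`[a₀,b₀] = [0,1]` and `[a_{k+1}, b_{k+1}]` is a subinterval of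
`[a_k + w_k/3, b_k − w_k/3]` of length `w_{k+1}`. -/
def IsNestedTower (a b : ℕ → ℝ) : Prop :=
  a 0 = 0 ∧ b 0 = 1 ∧
  ∀ k : ℕ, a k + wSeq k / 3 ≤ a (k + 1) ∧ b (k + 1) ≤ b k - wSeq k / 3 ∧
    b (k + 1) - a (k + 1) = wSeq (k + 1)

/-- The bump tower `f(x) = c_f·Σ_{k=0}^∞ w_k^m·B_{[a_k,b_k]}(x)`. -/
noncomputable def towerFn (m : ℕ) (cf : ℝ) (a b : ℕ → ℝ) (x : ℝ) : ℝ :=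
  cf * ∑' k : ℕ, wSeq k ^ m * bumpOn (a k) (b k) x

/-- `g = f/(1+f)`, the normalization of a nonnegative function `f` to `[0,1)`. -/
noncomputable def gFn (f : ℝ → ℝ) (x : ℝ) : ℝ := f x / (1 + f x)

/-- The noise distribution function built from `f` with parameter `β`. -/
noncomputable def cdfF (f : ℝ → ℝ) (β : ℝ) (x : ℝ) : ℝ :=
  if x < β then 0
  else if x ≤ 1 then 1 - β / x - (1 - β) / x * gFn f ((x - β) / (1 - β))
  else if x ≤ 1 + β then 2 - (1 + β) / x
  else 1

/-- The truncated bump tower using only the levels `i < k`. -/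
noncomputable def towerFnBelow (m k : ℕ) (cf : ℝ) (a b : ℕ → ℝ) (x : ℝ) : ℝ :=
  cf * ∑ i ∈ Finset.range k, wSeq i ^ m * bumpOn (a i) (b i) x


lemma u0_nonneg (x : ℝ) : 0 ≤ u0 x := by
  unfold u0; split_ifs
  · positivity
  · exact le_rfl

lemma u0_le_one (x : ℝ) : u0 x ≤ 1 := by
  unfold u0; split_ifs with h
  · rw [Real.exp_le_one_iff]
    have h1 : 0 < x * (1 / 3 - x) := mul_pos h.1 (by linarith [h.2])
    have : 0 < 1 / (x * (1 / 3 - x)) := by positivity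
    linarith
  · exact zero_le_one

lemma u0_meas : Measurable u0 := by
  unfold u0
  refine Measurable.ite measurableSet_Ioo ?_ measurable_const
  fun_prop

lemma u0_zero {x : ℝ} (h : x ∉ Set.Ioc (0:ℝ) (1/3)) : u0 x = 0 := by
  unfold u0
  rw [if_neg]
  intro h'; exact h ⟨h'.1, h'.2.le⟩

lemma u0_int : Integrable u0 := by
  have h : IntegrableOn u0 (Set.Ioc (0:ℝ) (1/3)) := by
    refine Measure.integrableOn_of_bounded (M := 1) (by simp) u0_meas.aestronglyMeasurable ?_
    refine Filter.Eventually.of_forall fun x => ?_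
    rw [Real.norm_eq_abs, abs_of_nonneg (u0_nonneg x)]; exact u0_le_one x
  exact h.integrable_of_forall_notMem_eq_zero (fun x hx => u0_zero hx)

lemma u0_total : ∫ t in (0:ℝ)..(1/3), u0 t = ∫ t, u0 t := by
  rw [intervalIntegral.integral_of_le (by norm_num)]
  exact setIntegral_eq_integral_of_forall_compl_eq_zero (fun x hx => u0_zero hx)

lemma u0_pos : 0 < ∫ t, u0 t := by
  rw [← u0_total]
  refine intervalIntegral.intervalIntegral_pos_of_pos_on ?_ ?_ (by norm_num)
  · exact u0_int.intervalIntegrable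
  · intro x hx
    unfold u0; rw [if_pos hx]; positivity

lemma uFn_nonneg (x : ℝ) : 0 ≤ uFn x := by
  unfold uFn; rw [u0_total]
  exact mul_nonneg (inv_nonneg.2 u0_pos.le) (integral_nonneg fun t => u0_nonneg t)

lemma uFn_le_one (x : ℝ) : uFn x ≤ 1 := by
  unfold uFn; rw [u0_total, inv_mul_le_iff₀ u0_pos, mul_one]
  exact setIntegral_le_integral u0_int (Filter.Eventually.of_forall u0_nonneg)

lemma uFn_third : uFn (1/3) = 1 := by
  unfold uFn; rw [u0_total]
  have h : ∫ t in Set.Iic (1/3 : ℝ), u0 t = ∫ t, u0 t :=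
    setIntegral_eq_integral_of_forall_compl_eq_zero (fun x hx => u0_zero (fun h => hx h.2))
  rw [h, inv_mul_cancel₀ u0_pos.ne']

lemma bump_nonneg (x : ℝ) : 0 ≤ bump x := by
  unfold bump; split_ifs <;> first | exact uFn_nonneg _ | norm_num

lemma bump_le_one (x : ℝ) : bump x ≤ 1 := by
  unfold bump; split_ifs <;> first | exact uFn_le_one _ | norm_num

lemma bump_mid {x : ℝ} (h1 : 1/3 ≤ x) (h2 : x ≤ 2/3) : bump x = 1 := by
  unfold bump
  rw [if_neg (by linarith)]
  split_ifs with h3 h4 h5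
  · rw [le_antisymm h3 h1, uFn_third]
  · rfl
  · have : 1 - x = 1/3 := by linarith
    rw [this, uFn_third]
  · linarith

lemma bump_out {x : ℝ} (h : x < 0 ∨ 1 < x) : bump x = 0 := by
  unfold bump
  rcases h with h | h
  · rw [if_pos h]
  · rw [if_neg (by linarith), if_neg (by linarith), if_neg (by linarith), if_neg (by linarith)]

lemma w_pos (k : ℕ) : 0 < wSeq k := by
  unfold wSeq; split_ifs <;> positivity

lemma w_zero : wSeq 0 = 1 := by simp [wSeq]
lemma w_one : wSeq 1 = 1/3 := by simp [wSeq]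
lemma w_two : wSeq 2 = 1/9 := by norm_num [wSeq, Nat.factorial, zpow_neg]

lemma w_succ (k : ℕ) : wSeq (k+1) ≤ wSeq k / 3 := by
  rcases Nat.eq_zero_or_pos k with rfl | hk
  · rw [w_zero, w_one]
  · have e : wSeq k / 3 = (3:ℝ) ^ (-(k.factorial : ℤ) - 1) := by
      unfold wSeq; rw [if_neg hk.ne', zpow_sub₀ (by norm_num), zpow_one]
    rw [e]; unfold wSeq; rw [if_neg (by omega)]
    apply zpow_le_zpow_right₀ (by norm_num)
    have h1 : k.factorial + 1 ≤ (k+1).factorial := by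
      rw [Nat.factorial_succ]
      have := Nat.factorial_pos k
      nlinarith
    omega

lemma w_add (k i : ℕ) : wSeq (i+k) ≤ wSeq k * (1/3)^i := by
  induction i with
  | zero => simp
  | succ n ih =>
    have := w_succ (n+k)
    rw [show n+1+k = n+k+1 by ring, pow_succ]
    linarith

lemma w_pow {m : ℕ} (hm : 1 ≤ m) (k i : ℕ) : wSeq (i+k)^m ≤ wSeq k ^ m * (1/3)^i := by
  calc wSeq (i+k)^m ≤ (wSeq k * (1/3)^i)^m := pow_le_pow_left₀ (w_pos _).le (w_add k i) m
    _ = wSeq k ^ m * ((1/3)^i)^m := mul_pow _ _ _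
    _ ≤ wSeq k ^ m * (1/3)^i := by
      apply mul_le_mul_of_nonneg_left _ (pow_nonneg (w_pos _).le _)
      apply pow_le_of_le_one (by positivity) _ (by omega)
      exact pow_le_one₀ (by norm_num) (by norm_num)

lemma tail_bound {m : ℕ} (hm : 1 ≤ m) (k : ℕ) (B : ℕ → ℝ) (h0 : ∀ i, 0 ≤ B i)
    (h1 : ∀ i, B i ≤ 1) : Summable (fun i => wSeq (i+k)^m * B (i+k)) ∧
      ∑' i, wSeq (i+k)^m * B (i+k) ≤ 3/2 * wSeq k ^ m := by
  have hle : ∀ i, wSeq (i+k)^m * B (i+k) ≤ wSeq k ^ m * (1/3)^i := fun i =>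
    (mul_le_of_le_one_right (pow_nonneg (w_pos _).le _) (h1 _)).trans (w_pow hm k i)
  have hg : HasSum (fun i : ℕ => wSeq k ^ m * (1/3 : ℝ)^i) (wSeq k ^ m * (1 - 1/3)⁻¹) :=
    (hasSum_geometric_of_lt_one (by norm_num) (by norm_num)).mul_left _
  have hs : Summable (fun i => wSeq (i+k)^m * B (i+k)) :=
    Summable.of_nonneg_of_le (fun i => mul_nonneg (pow_nonneg (w_pos _).le _) (h0 _)) hle hg.summable
  refine ⟨hs, (hs.tsum_le_tsum hle hg.summable).trans ?_⟩
  rw [hg.tsum_eq]; norm_num; linarith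

lemma tower_len {a b : ℕ → ℝ} (hab : IsNestedTower a b) (i : ℕ) : b i - a i = wSeq i := by
  cases i with
  | zero => rw [hab.1, hab.2.1, w_zero]; norm_num
  | succ n => exact (hab.2.2 n).2.2

lemma tower_mono {a b : ℕ → ℝ} (hab : IsNestedTower a b) {i n : ℕ} (h : i ≤ n) :
    a i ≤ a n ∧ b n ≤ b i := by
  induction n, h using Nat.le_induction with
  | base => exact ⟨le_rfl, le_rfl⟩
  | succ n _ ih =>
    have := hab.2.2 n
    have := w_pos n
    constructor <;> linarith

lemma bumpOn_one {a b : ℕ → ℝ} (hab : IsNestedTower a b) {i k : ℕ} (h : i < k) {q : ℝ}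
    (hq : q ∈ Set.Icc (a k) (b k)) : bumpOn (a i) (b i) q = 1 := by
  unfold bumpOn
  have h1 := tower_mono hab (show i+1 ≤ k from h)
  have h2 := hab.2.2 i
  have h3 := tower_len hab i
  have h4 := w_pos i
  rw [h3]
  apply bump_mid
  · rw [le_div_iff₀ h4]; linarith [hq.1]
  · rw [div_le_iff₀ h4]; linarith [hq.2]

lemma bumpOn_zero {a b : ℕ → ℝ} (hab : IsNestedTower a b) {i k : ℕ} (h : k ≤ i) {q : ℝ}
    (hq : q ∉ Set.Icc (a k) (b k)) : bumpOn (a i) (b i) q = 0 := by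
  unfold bumpOn
  have h1 := tower_mono hab h
  have h3 := tower_len hab i
  have h4 := w_pos i
  rw [h3]
  apply bump_out
  rw [Set.mem_Icc, not_and_or, not_le, not_le] at hq
  rcases hq with hq | hq
  · left; apply div_neg_of_neg_of_pos _ h4; linarith
  · right; rw [lt_div_iff₀ h4]; linarith

lemma tower_split {m : ℕ} (hm : 1 ≤ m) (k : ℕ) (cf : ℝ) (a b : ℕ → ℝ) (q : ℝ) :
    towerFn m cf a b q = towerFnBelow m k cf a b q +
      cf * ∑' i, wSeq (i+k)^m * bumpOn (a (i+k)) (b (i+k)) q := by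
  unfold towerFn towerFnBelow
  have hs := (tail_bound hm 0 (fun i => bumpOn (a i) (b i) q) (fun i => bump_nonneg _)
    (fun i => bump_le_one _)).1
  simp only [add_zero] at hs
  rw [← hs.sum_add_tsum_nat_add k, mul_add]

/-- upper bound for the survival probability -/
lemma surv_upper {cf L β q f p : ℝ} (hcf : 0 < cf) (hL : 0 ≤ L) (h1 : cf * (L + 6) < 1)
    (hβ : β = (1 + cf * L) / 2) (hp : p = β + (1 - β) * q) (hq : 13/27 ≤ q)
    (hf1 : 0 ≤ f) (hf2 : f ≤ 3/2 * cf) :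
    β / p + (1 - β) / p * (f / (1 + f)) ≤ 1 / (1 + cf) := by
  have hcL : 0 ≤ cf * L := by positivity
  have hc6 : cf < 1/6 := by nlinarith
  have hβ0 : 0 < β := by rw [hβ]; positivity
  have hβ1 : 3 * cf < 1 - β := by rw [hβ]; nlinarith
  have hpp : 0 < p := by rw [hp]; nlinarith
  have hg : (1 + cf) * (f / (1 + f)) ≤ 3/2 * cf := by
    rw [← mul_div_assoc, div_le_iff₀ (by linarith)]
    nlinarith
  have e : β / p + (1 - β) / p * (f / (1 + f)) = (β + (1 - β) * (f / (1 + f))) / p := by ring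
  rw [e, div_le_div_iff₀ hpp (by linarith), hp]
  have k1 : (1 - β) * ((1 + cf) * (f / (1 + f))) ≤ (1 - β) * (3/2 * cf) :=
    mul_le_mul_of_nonneg_left hg (by linarith)
  have k2 : (1 - β) * (13/27) ≤ (1 - β) * q := mul_le_mul_of_nonneg_left hq (by linarith)
  have k3 : cf * β ≤ cf * (1 - 3 * cf) := mul_le_mul_of_nonneg_left (by linarith) hcf.le
  have k4 : 3 * cf * (13/27 - 3/2*cf) ≤ (1 - β) * (13/27 - 3/2*cf) :=
    mul_le_mul_of_nonneg_right hβ1.le (by linarith)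
  nlinarith

/-- Where the instances `F_j` and `F₀` differ, and by how much.  Here `a, b` is a full
admissible nested tower whose level-`k` interval is the `j`-th cell
`I_j = [a_{k−1} + w_{k−1}/3 + (j−1)w_k, … + w_k]` of the level-`k` grid, `F_j` is built
from the full tower and `F₀` from its truncation below level `k`.  For `p ∈ [b,1]` and
`q = (p−b)/(1−b)`: (1) if `q ∉ I_j` then `F_j(p) = F₀(p)`; (2) if `q ∈ I_j` then
`0 ≤ (1 − F_j(p)) − (1 − F₀(p)) ≤ (3/2)c_f w_k^m` and both survival probabilities lie in
`[1/2, 1/(1+c_f)]`. -/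
theorem instances_difference_bound (m : ℕ) (hm : 1 ≤ m) (cf : ℝ)
    (hcf : 0 < cf) (hcf' : cf < 1 / (L1 + 6))
    (k : ℕ) (hk : 3 ≤ k)
    (a b : ℕ → ℝ) (hab : IsNestedTower a b)
    (j : ℕ) (hj1 : 1 ≤ j) (hjQ : (j : ℝ) ≤ wSeq (k - 1) / (3 * wSeq k))
    (hak : a k = a (k - 1) + wSeq (k - 1) / 3 + ((j : ℝ) - 1) * wSeq k)
    (β : ℝ) (hβ : β = (1 + cf * L1) / 2)
    (p : ℝ) (hp : p ∈ Set.Icc β 1) (q : ℝ) (hq : q = (p - β) / (1 - β)) :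
    (q ∉ Set.Icc (a k) (b k) →
      cdfF (towerFn m cf a b) β p = cdfF (towerFnBelow m k cf a b) β p) ∧
    (q ∈ Set.Icc (a k) (b k) →
      0 ≤ (1 - cdfF (towerFn m cf a b) β p) - (1 - cdfF (towerFnBelow m k cf a b) β p) ∧
      (1 - cdfF (towerFn m cf a b) β p) - (1 - cdfF (towerFnBelow m k cf a b) β p) ≤
        3 / 2 * cf * wSeq k ^ m ∧
      1 / 2 ≤ 1 - cdfF (towerFnBelow m k cf a b) β p ∧
      1 - cdfF (towerFnBelow m k cf a b) β p ≤ 1 / (1 + cf) ∧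
      1 / 2 ≤ 1 - cdfF (towerFn m cf a b) β p ∧
      1 - cdfF (towerFn m cf a b) β p ≤ 1 / (1 + cf)) := by
  have hL : 0 ≤ L1 := Real.iSup_nonneg fun x => abs_nonneg _
  have h1 : cf * (L1 + 6) < 1 := by rwa [lt_div_iff₀ (by linarith)] at hcf'
  have hcL : 0 ≤ cf * L1 := by positivity
  have hβh : 1/2 ≤ β := by rw [hβ]; linarith
  have hβ1 : 0 < 1 - β := by rw [hβ]; nlinarith
  obtain ⟨hp1, hp2⟩ := hp
  have hpp : 0 < p := by linarith
  have hpq : p = β + (1 - β) * q := by rw [hq]; field_simp; ring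
  have hF : ∀ f : ℝ → ℝ, cdfF f β p = 1 - β / p - (1 - β) / p * (f q / (1 + f q)) := by
    intro f
    unfold cdfF gFn
    rw [if_neg (by linarith), if_pos hp2, ← hq]
  rw [hF, hF, tower_split hm k]
  constructor
  · intro hqn
    have : ∀ i, wSeq (i+k)^m * bumpOn (a (i+k)) (b (i+k)) q = 0 := fun i => by
      rw [bumpOn_zero hab (Nat.le_add_left k i) hqn, mul_zero]
    simp only [this, tsum_zero, mul_zero, add_zero]
  · intro hqm
    have ht := (tail_bound hm k (fun i => bumpOn (a i) (b i) q) (fun i => bump_nonneg _)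
      (fun i => bump_le_one _)).2
    have hall := (tail_bound hm 0 (fun i => bumpOn (a i) (b i) q) (fun i => bump_nonneg _)
      (fun i => bump_le_one _)).2
    have hsplit := tower_split hm k cf a b q
    have ht0 : 0 ≤ ∑' i, wSeq (i+k)^m * bumpOn (a (i+k)) (b (i+k)) q :=
      tsum_nonneg fun i => mul_nonneg (pow_nonneg (w_pos _).le _) (bump_nonneg _)
    have hf0 : 0 ≤ towerFnBelow m k cf a b q :=
      mul_nonneg hcf.le (Finset.sum_nonneg fun i _ =>
        mul_nonneg (pow_nonneg (w_pos _).le _) (bump_nonneg _))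
    simp only [add_zero, w_zero, one_pow, mul_one] at hall
    have hfall : towerFn m cf a b q ≤ 3/2 * cf := by
      unfold towerFn; nlinarith
    rw [hsplit] at hfall
    have hd0 := mul_nonneg hcf.le ht0
    have hd1 := mul_le_mul_of_nonneg_left ht hcf.le
    generalize cf * ∑' i, wSeq (i+k)^m * bumpOn (a (i+k)) (b (i+k)) q = d at *
    generalize towerFnBelow m k cf a b q = f at *
    have hq13 : 13/27 ≤ q := by
      have e0 := (hab.2.2 0).1
      have e1 := (hab.2.2 1).1
      have e2 := (hab.2.2 2).1
      have e3 := (tower_mono hab hk).1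
      simp only [Nat.reduceAdd, zero_add, hab.1, w_zero, w_one, w_two] at e0 e1 e2
      linarith [hqm.1]
    have hu1 := surv_upper hcf hL h1 hβ hpq hq13 hf0 (by linarith)
    have hu2 := surv_upper hcf hL h1 hβ hpq hq13 (add_nonneg hf0 hd0) (by linarith)
    have hr0 : 0 ≤ (1 - β) / p := by positivity
    have hr1 : (1 - β) / p ≤ 1 := by rw [div_le_one hpp]; linarith
    have hβp : 1/2 ≤ β / p := by rw [le_div_iff₀ hpp]; linarith
    have hg0 : 0 ≤ f / (1 + f) := by positivity
    have hgd : (f + d) / (1 + (f + d)) - f / (1 + f) = d / ((1 + (f + d)) * (1 + f)) := by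
      have : 1 + f ≠ 0 := by positivity
      have : 1 + (f + d) ≠ 0 := by positivity
      field_simp; ring
    have hgd0 : 0 ≤ (f + d) / (1 + (f + d)) - f / (1 + f) := by rw [hgd]; positivity
    have hgd1 : (f + d) / (1 + (f + d)) - f / (1 + f) ≤ d := by
      rw [hgd]
      apply div_le_self hd0
      nlinarith [mul_nonneg hf0 hd0]
    generalize (f + d) / (1 + (f + d)) = g at *
    generalize f / (1 + f) = g' at *
    generalize (1 - β) / p = r at *
    have hrg' := mul_nonneg hr0 hg0
    have hrd := mul_nonneg hr0 hgd0
    have hrd' : r * (g - g') ≤ 1 * (g - g') := mul_le_mul_of_nonneg_right hr1 hgd0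
    refine ⟨by linarith, by linarith, by linarith, by linarith, by linarith, by linarith⟩
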